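/- There are absolute constants α₀ ∈ (0,1) and c > 0 such that the following holds. Let k ≥ 1 be an integer, let S ⊆ [n]^d with |S| ≤ 2k, let α ∈ (0, α₀), F ≥ 2d, and B = b^d ≥ (2π)^{4F·d} · k/α^d with b a power of 2 dividing n. Let H_1,…,H_{r_max} be independent random hashings, H_r = (π_{Σ_r,q_r}, B, F) with each Σ_r uniform on M_{d×d} and each q_r uniform on [n]^d safely independently. Then for every fixed i ∈ [n]^d, with probability at least 1 − 2^{−c·√α·r_max}, the element i is isolated (with respect to S, at parameter α) under at least (1 − √α)·r_max of the hashings H_1,…,H_{r_max}. -/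

import Mathlib

/- STATEMENT 4: There are absolute constants α₀ ∈ (0,1) and c > 0 such that: for k ≥ 1,
   S ⊆ [n]^d with |S| ≤ 2k, α ∈ (0,α₀), F ≥ 2d, B = b^d ≥ (2π)^{4Fd}·k/α^d, if
   H_1,…,H_{r_max} are independent random hashings (Σ_r uniform on M_{d×d}, q_r uniform
   on [n]^d, independently), then every fixed i ∈ [n]^d is, with probability at least
   1 − 2^{−c·√α·r_max}, isolated (w.r.t. S at α) under ≥ (1−√α)·r_max of the hashings. -/

open scoped BigOperators Classical
open Finset

def circAbs (n : ℕ) (t : ZMod n) : ℕ := min t.val (n - t.val)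

def linf {n d : ℕ} (v : Fin d → ZMod n) : ℕ := Finset.univ.sup (fun s => circAbs n (v s))

def fperm {n d : ℕ} (M : Matrix (Fin d) (Fin d) (ZMod n)) (q : Fin d → ZMod n)
    (i : Fin d → ZMod n) : Fin d → ZMod n := M.mulVec (i - q)

def bucketPt {n d : ℕ} (nb : ℕ) (v : Fin d → ZMod n) : Fin d → ZMod n :=
  fun s => ((nb * ((v s).val / nb) : ℕ) : ZMod n)

noncomputable def ballInf {n d : ℕ} [NeZero n] (c : Fin d → ZMod n) (r : ℝ) :
    Finset (Fin d → ZMod n) :=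
  Finset.univ.filter (fun y => (linf (c - y) : ℝ) ≤ r)

noncomputable def isolatedUnder {n d : ℕ} [NeZero n] (b F : ℕ) (α : ℝ)
    (S : Finset (Fin d → ZMod n)) (M : Matrix (Fin d) (Fin d) (ZMod n))
    (q : Fin d → ZMod n) (i : Fin d → ZMod n) : Prop :=
  ∀ t : ℕ,
    ((((S.erase i).image (fun j => fperm M q j)) ∩
        ballInf (bucketPt (n / b) (fperm M q i)) (((n : ℝ) / b) * 2 ^ t)).card : ℝ)
      ≤ ((2 * Real.pi) ^ (F * d) : ℝ)⁻¹ * α ^ ((d : ℝ) / 2) * 2 ^ ((t + 1) * d) * 2 ^ t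

/-! If `i` is not isolated at scale `t`, then too many `j ≠ i` in `S` satisfy
`‖Σ(i - j)‖ ≤ (n/b) 2 ^ (t + 1)`. For `v ≠ 0` the entries of `Σv` lie in the subgroup of `ℤ/nℤ`
generated by the coordinates of `v`. Its nonzero elements have norm at least its index `g`, and
`Σv ≠ 0`, so only radii `r ≥ g` matter. Conditioning on `Σ` modulo `2` fixes the parity of the
determinant and leaves the entries of `Σv` independent and uniform on cosets of a subgroup of index
at most `2g`; hence `ℙ(‖Σv‖ ≤ r) ≤ ((2r + 2g)/n) ^ d ≤ (4r/n) ^ d`. Markov's inequality over `j` and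
a union bound over `t`, which is a convergent geometric series, bound the probability that a single
hashing fails by `√α / 4`, and the Chernoff bound handles independent hashings. -/

section CircularNorm

variable {n d : ℕ}

lemma linf_le_iff {v : Fin d → ZMod n} {r : ℕ} : linf v ≤ r ↔ ∀ l, circAbs n (v l) ≤ r := by
  simp [linf]

variable [NeZero n]

lemma circAbs_eq_natAbs_valMinAbs (x : ZMod n) : circAbs n x = x.valMinAbs.natAbs :=
  x.valMinAbs_natAbs_eq_min.symm

lemma circAbs_add_le (x y : ZMod n) : circAbs n (x + y) ≤ circAbs n x + circAbs n y := by
  simp only [circAbs_eq_natAbs_valMinAbs]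
  exact (ZMod.natAbs_valMinAbs_add_le x y).trans (Int.natAbs_add_le _ _)

lemma linf_add_le (v w : Fin d → ZMod n) : linf (v + w) ≤ linf v + linf w :=
  linf_le_iff.2 fun l => (circAbs_add_le _ _).trans <|
    add_le_add (linf_le_iff.1 le_rfl l) (linf_le_iff.1 le_rfl l)

lemma linf_sub_bucketPt_le {g : ℕ} (hg : 0 < g) (v : Fin d → ZMod n) :
    linf (v - bucketPt g v) ≤ g := by
  refine linf_le_iff.2 fun l => ?_
  have hmod : (v - bucketPt g v) l = (((v l).val % g : ℕ) : ZMod n) := by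
    have h := congrArg (Nat.cast (R := ZMod n)) (Nat.mod_add_div (v l).val g)
    rw [ZMod.natCast_zmod_val, Nat.cast_add] at h
    exact sub_eq_of_eq_add h.symm
  calc circAbs n ((v - bucketPt g v) l) ≤ (((v l).val % g : ℕ) : ZMod n).val :=
        hmod ▸ min_le_left _ _
    _ ≤ (v l).val % g := (ZMod.val_natCast n _).trans_le (Nat.mod_le _ _)
    _ ≤ g := (Nat.mod_lt _ hg).le

end CircularNorm

lemma card_filter_Ioc_modEq_mul_lt {a b g : ℤ} (hab : a ≤ b) (hg : 0 < g) (v : ℤ) :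
    #{z ∈ Ioc a b | z ≡ v [ZMOD g]} * g < b - a + g := by
  have hgQ : (0 : ℚ) < g := by exact_mod_cast hg
  have hlt : ((#{z ∈ Ioc a b | z ≡ v [ZMOD g]} : ℤ) : ℚ) < (b - a) / g + 1 := by
    rw [Int.Ioc_filter_modEq_card a b hg v, Int.cast_max, max_lt_iff]
    have habQ : (0 : ℚ) ≤ b - a := sub_nonneg.2 (by exact_mod_cast hab)
    refine ⟨?_, by push_cast; positivity⟩
    have hsub : ((b - a) / g : ℚ) = (b - v) / g - (a - v) / g := by ring
    push_cast
    linarith [Int.floor_le ((b - v : ℚ) / g), Int.lt_floor_add_one ((a - v : ℚ) / g)]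
  have hmul := mul_lt_mul_of_pos_right hlt hgQ
  rw [add_mul, div_mul_cancel₀ _ hgQ.ne', one_mul] at hmul
  exact_mod_cast hmul

section Subgroups

variable {n : ℕ} [NeZero n]

lemma index_dvd_of_intCast_mem {I : AddSubgroup (ZMod n)} {z : ℤ} (hz : (z : ZMod n) ∈ I) :
    (I.index : ℤ) ∣ z := by
  have hcard : (Nat.card I * I.index : ℤ) = n := by
    exact_mod_cast I.card_mul_index.trans (Nat.card_zmod n)
  have hzero : ((Nat.card I * z : ℤ) : ZMod n) = 0 := by
    have h : Nat.card I • (z : ZMod n) = 0 :=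
      congrArg Subtype.val (card_nsmul_eq_zero' (x := (⟨z, hz⟩ : I)))
    rw [Int.cast_mul, Int.cast_natCast, ← nsmul_eq_mul, h]
  rw [ZMod.intCast_zmod_eq_zero_iff_dvd, ← hcard] at hzero
  exact Int.dvd_of_mul_dvd_mul_left (mod_cast Nat.card_pos.ne') hzero

lemma eq_zero_of_circAbs_lt_index {I : AddSubgroup (ZMod n)} {x : ZMod n} (hx : x ∈ I)
    (hlt : circAbs n x < I.index) : x = 0 := by
  rw [← x.coe_valMinAbs] at hx
  rw [circAbs_eq_natAbs_valMinAbs] at hlt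
  exact x.valMinAbs_eq_zero.1 <|
    Int.eq_zero_of_abs_lt_dvd (index_dvd_of_intCast_mem hx) <| by
      rwa [Int.abs_eq_natAbs, Nat.cast_lt]

lemma card_filter_mem_circAbs_add_mul_index_le (I : AddSubgroup (ZMod n))
    [DecidablePred (· ∈ I)] (a : ZMod n) (r : ℕ) :
    #{x | x ∈ I ∧ circAbs n (a + x) ≤ r} * I.index ≤ 2 * r + I.index := by
  have hg : (0 : ℤ) < I.index := by exact_mod_cast Nat.pos_of_ne_zero I.index_ne_zero_of_finite
  have hle : #{x | x ∈ I ∧ circAbs n (a + x) ≤ r} ≤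
      #{z ∈ Ioc (-(r : ℤ) - 1) r | z ≡ a.valMinAbs [ZMOD I.index]} := by
    refine card_le_card_of_injOn (fun x => (a + x).valMinAbs) (fun x hx => ?_)
      (fun x _ y _ hxy => add_left_cancel (ZMod.injective_valMinAbs hxy))
    obtain ⟨hxI, hxr⟩ := (mem_filter.1 hx).2
    rw [circAbs_eq_natAbs_valMinAbs] at hxr
    refine mem_filter.2 ⟨mem_Ioc.2 (by dsimp only; omega), (Int.modEq_iff_dvd.2 ?_).symm⟩
    exact index_dvd_of_intCast_mem (by simpa using hxI)
  have hlt := card_filter_Ioc_modEq_mul_lt (show -(r : ℤ) - 1 ≤ r by omega) hg a.valMinAbs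
  have hmul := Nat.mul_le_mul_right I.index hle
  zify at hmul ⊢
  linarith

lemma index_map_nsmul_le (I : AddSubgroup (ZMod n)) {q : ℕ} (hq : 0 < q) :
    (I.map (nsmulAddMonoidHom q)).index ≤ q * I.index := by
  rw [AddSubgroup.index_map, IsAddCyclic.index_nsmulAddMonoidHom_range, mul_comm]
  exact Nat.mul_le_mul (Nat.gcd_le_right _ hq) <|
    Nat.le_of_dvd (Nat.pos_of_ne_zero I.index_ne_zero_of_finite)
      (AddSubgroup.index_dvd_of_le le_sup_left)

end Subgroups

section Homomorphisms

variable {G : Type*} [AddGroup G] [Fintype G]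

lemma card_filter_comp_addMonoidHom {H : Type*} [AddGroup H] [Fintype H] (f : G →+ H)
    [DecidablePred (· ∈ f.range)] (P : H → Prop) [DecidablePred P] :
    #{g | P (f g)} = #{x | x ∈ f.range ∧ P x} * Nat.card f.ker := by
  have hmaps : ∀ g ∈ ({g | P (f g)} : Finset G), f g ∈ ({x | x ∈ f.range ∧ P x} : Finset H) := by
    simp
  rw [card_eq_sum_card_fiberwise hmaps, ← smul_eq_mul, ← sum_const]
  refine sum_congr rfl fun x hx => ?_
  obtain ⟨hxf, hPx⟩ := (mem_filter.1 hx).2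
  have hfib : ({g ∈ ({g | P (f g)} : Finset G) | f g = x} : Finset G) =
      ({g | f g = x} : Finset G) := by
    ext g
    simp +contextual [hPx]
  rw [hfib, AddMonoidHom.card_fiber_eq_of_mem_range f hxf ⟨0, map_zero f⟩,
    ← Fintype.card_subtype, ← Nat.card_eq_fintype_card]
  rfl

variable {n : ℕ} [NeZero n]

lemma card_filter_circAbs_add_mul_le (f : G →+ ZMod n) (a : ZMod n) (r : ℕ) :
    #{g | circAbs n (a + f g) ≤ r} * n ≤ (2 * r + f.range.index) * Fintype.card G := by
  have hn : f.range.index * Nat.card f.range = n := by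
    rw [mul_comm, f.range.card_mul_index, Nat.card_zmod]
  have hG : Nat.card f.range * Nat.card f.ker = Fintype.card G := by
    rw [mul_comm, ← AddSubgroup.index_ker, f.ker.card_mul_index, Nat.card_eq_fintype_card]
  calc #{g | circAbs n (a + f g) ≤ r} * n
      = #{x | x ∈ f.range ∧ circAbs n (a + x) ≤ r} * Nat.card f.ker *
          (f.range.index * Nat.card f.range) := by
        rw [card_filter_comp_addMonoidHom f (fun x => circAbs n (a + x) ≤ r), hn]
    _ = #{x | x ∈ f.range ∧ circAbs n (a + x) ≤ r} * f.range.index *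
          (Nat.card f.range * Nat.card f.ker) := by ring
    _ ≤ (2 * r + f.range.index) * Fintype.card G := by
        rw [hG]
        gcongr
        exact card_filter_mem_circAbs_add_mul_index_le _ a r

end Homomorphisms

section Matrices

variable {n d : ℕ}

/-- The linear functional `ρ ↦ ρ ⬝ᵥ v` as a homomorphism of additive groups. Its range is the
subgroup of `ℤ/nℤ` generated by the coordinates of `v`. -/
def dotHom (v : Fin d → ZMod n) : (Fin d → ZMod n) →+ ZMod n :=
  AddMonoidHom.mk' (· ⬝ᵥ v) fun ρ σ => add_dotProduct ρ σ v

lemma range_dotHom_nsmul (q : ℕ) (v : Fin d → ZMod n) :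
    (dotHom (q • v)).range = (dotHom v).range.map (nsmulAddMonoidHom q) := by
  rw [AddMonoidHom.map_range]
  refine congrArg AddMonoidHom.range (DFunLike.ext _ _ fun ρ => ?_)
  exact dotProduct_smul q ρ v

variable [NeZero n]

lemma card_filter_linf_add_mulVec_mul_le (a v : Fin d → ZMod n) (r : ℕ) :
    #{N : Matrix (Fin d) (Fin d) (ZMod n) | linf (a + N.mulVec v) ≤ r} * n ^ d ≤
      (2 * r + (dotHom v).range.index) ^ d * Fintype.card (Matrix (Fin d) (Fin d) (ZMod n)) := by
  have hpi : #{N : Matrix (Fin d) (Fin d) (ZMod n) | linf (a + N.mulVec v) ≤ r} =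
      ∏ l, #{ρ | circAbs n (a l + dotHom v ρ) ≤ r} := by
    rw [← Fintype.card_piFinset]
    refine congrArg card (Finset.ext fun N => ?_)
    refine ((mem_filter_univ N).trans linf_le_iff).trans (.trans ?_ Fintype.mem_piFinset.symm)
    exact forall_congr' fun l => by rw [mem_filter_univ]; rfl
  have hcard : Fintype.card (Matrix (Fin d) (Fin d) (ZMod n)) =
      Fintype.card (Fin d → ZMod n) ^ d :=
    (Fintype.card_fun (α := Fin d) (β := Fin d → ZMod n)).trans (by rw [Fintype.card_fin])
  calc #{N : Matrix (Fin d) (Fin d) (ZMod n) | linf (a + N.mulVec v) ≤ r} * n ^ d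
      = ∏ l, (#{ρ | circAbs n (a l + dotHom v ρ) ≤ r} * n) := by
        rw [hpi, prod_mul_distrib, prod_const, card_univ, Fintype.card_fin]
    _ ≤ ∏ _l : Fin d, ((2 * r + (dotHom v).range.index) * Fintype.card (Fin d → ZMod n)) :=
        prod_le_prod' fun l _ => card_filter_circAbs_add_mul_le (dotHom v) (a l) r
    _ = _ := by
        rw [prod_const, card_univ, Fintype.card_fin, mul_pow, hcard]

variable {q : ℕ} {U : Finset (Matrix (Fin d) (Fin d) (ZMod n))}

lemma card_mul_card_filter_linf_mulVec_le (hU : ∀ M ∈ U, ∀ N, M + q • N ∈ U)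
    (v : Fin d → ZMod n) (r : ℕ) :
    Fintype.card (Matrix (Fin d) (Fin d) (ZMod n)) * #{M ∈ U | linf (M.mulVec v) ≤ r} ≤
      ∑ M ∈ U, #{N : Matrix (Fin d) (Fin d) (ZMod n) |
        linf (M.mulVec v + N.mulVec (q • v)) ≤ r} := by
  have hswap := sum_card_bipartiteAbove_eq_sum_card_bipartiteBelow (s := U) (t := univ)
    fun M (N : Matrix (Fin d) (Fin d) (ZMod n)) => linf (M.mulVec v + N.mulVec (q • v)) ≤ r
  simp only [bipartiteAbove, bipartiteBelow] at hswap
  rw [hswap, ← card_univ, ← smul_eq_mul]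
  refine card_nsmul_le_sum _ _ _ fun N _ => ?_
  refine card_le_card_of_injOn (fun M => M + q • -N) (fun M hM => ?_)
    (fun M _ M' _ h => add_right_cancel h)
  obtain ⟨hMU, hMr⟩ := mem_filter.1 hM
  refine mem_filter.2 ⟨hU M hMU (-N), ?_⟩
  rwa [Matrix.add_mulVec, smul_neg, Matrix.neg_mulVec, Matrix.smul_mulVec, Matrix.mulVec_smul,
    neg_add_cancel_right]

lemma mulVec_eq_zero_of_linf_lt_index {M : Matrix (Fin d) (Fin d) (ZMod n)} {v : Fin d → ZMod n}
    (h : linf (M.mulVec v) < (dotHom v).range.index) : M.mulVec v = 0 :=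
  funext fun l => eq_zero_of_circAbs_lt_index (I := (dotHom v).range) ⟨M l, rfl⟩
    ((linf_le_iff.1 le_rfl l).trans_lt h)

lemma card_filter_linf_mulVec_mul_le (hq : 0 < q) (hU : ∀ M ∈ U, ∀ N, M + q • N ∈ U)
    {v : Fin d → ZMod n} (hv : ∀ M ∈ U, M.mulVec v ≠ 0) (r : ℕ) :
    #{M ∈ U | linf (M.mulVec v) ≤ r} * n ^ d ≤ ((q + 2) * r) ^ d * #U := by
  rcases lt_or_ge r (dotHom v).range.index with hr | hr
  · have hempty : #{M ∈ U | linf (M.mulVec v) ≤ r} = 0 :=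
      card_eq_zero.2 <| filter_eq_empty_iff.2 fun M hM hle =>
        hv M hM (mulVec_eq_zero_of_linf_lt_index (hle.trans_lt hr))
    simp [hempty]
  have hindex : 2 * r + (dotHom (q • v)).range.index ≤ (q + 2) * r := by
    rw [range_dotHom_nsmul]
    nlinarith [index_map_nsmul_le (dotHom v).range hq]
  refine Nat.le_of_mul_le_mul_left ?_
    (Fintype.card_pos (α := Matrix (Fin d) (Fin d) (ZMod n)))
  set K := Fintype.card (Matrix (Fin d) (Fin d) (ZMod n))
  calc K * (#{M ∈ U | linf (M.mulVec v) ≤ r} * n ^ d)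
      ≤ (∑ M ∈ U, #{N : Matrix (Fin d) (Fin d) (ZMod n) |
          linf (M.mulVec v + N.mulVec (q • v)) ≤ r}) * n ^ d := by
        rw [← mul_assoc]
        gcongr
        exact card_mul_card_filter_linf_mulVec_le hU v r
    _ ≤ ∑ M ∈ U, ((q + 2) * r) ^ d * K := by
        rw [sum_mul]
        refine sum_le_sum fun M _ => (card_filter_linf_add_mulVec_mul_le _ _ r).trans ?_
        gcongr
    _ = K * (((q + 2) * r) ^ d * #U) := by
        rw [sum_const, smul_eq_mul]
        ring

end Matrices

section OddDeterminant

variable {n d : ℕ} [NeZero n]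

/-- The set `M_{d×d}` of `d × d` matrices over `ℤ/nℤ` with odd determinant, where parity is that
of the representative in `{0, …, n - 1}`. -/
def oddDetMatrices (n d : ℕ) [NeZero n] : Finset (Matrix (Fin d) (Fin d) (ZMod n)) :=
  {M | Odd M.det.val}

lemma odd_val_iff_castHom_eq_one (hn : 2 ∣ n) (x : ZMod n) :
    Odd x.val ↔ ZMod.castHom hn (ZMod 2) x = 1 := by
  rw [← ZMod.natCast_eq_one_iff_odd, ZMod.natCast_val, ZMod.castHom_apply]

lemma add_two_nsmul_mem_oddDetMatrices (hn : 2 ∣ n) {M : Matrix (Fin d) (Fin d) (ZMod n)}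
    (hM : M ∈ oddDetMatrices n d) (N : Matrix (Fin d) (Fin d) (ZMod n)) :
    M + 2 • N ∈ oddDetMatrices n d := by
  have hmod : (ZMod.castHom hn (ZMod 2)).mapMatrix (M + 2 • N) =
      (ZMod.castHom hn (ZMod 2)).mapMatrix M := by
    rw [map_add, map_nsmul, ← Nat.cast_smul_eq_nsmul (ZMod 2), CharP.cast_eq_zero, zero_smul,
      add_zero]
  simp only [oddDetMatrices, mem_filter_univ, odd_val_iff_castHom_eq_one hn,
    RingHom.map_det] at hM ⊢
  rwa [hmod]

lemma oddDetMatrices_nonempty (hn : 1 < n) : (oddDetMatrices n d).Nonempty := by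
  have : Fact (1 < n) := ⟨hn⟩
  exact ⟨1, by simp [oddDetMatrices, ZMod.val_one]⟩

variable {m : ℕ}

lemma isUnit_of_mem_oddDetMatrices (hn : n = 2 ^ m) {M : Matrix (Fin d) (Fin d) (ZMod n)}
    (hM : M ∈ oddDetMatrices n d) : IsUnit M := by
  subst hn
  rw [Matrix.isUnit_iff_isUnit_det, ← ZMod.natCast_zmod_val M.det, ZMod.isUnit_iff_coprime]
  exact Nat.Coprime.pow_right _ (Nat.coprime_two_right.2 ((mem_filter_univ M).1 hM))

lemma card_filter_oddDetMatrices_linf_mulVec_mul_le (hn : n = 2 ^ m) (hn1 : 1 < n)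
    {v : Fin d → ZMod n} (hv : v ≠ 0) (r : ℕ) :
    #{M ∈ oddDetMatrices n d | linf (M.mulVec v) ≤ r} * n ^ d ≤
      (4 * r) ^ d * #(oddDetMatrices n d) := by
  have hm : m ≠ 0 := by
    rintro rfl
    exact hn1.ne' hn
  have htwo : 2 ∣ n := hn ▸ dvd_pow_self 2 hm
  refine card_filter_linf_mulVec_mul_le two_pos
    (fun M hM => add_two_nsmul_mem_oddDetMatrices htwo hM) (fun M hM hMv => hv ?_) r
  exact Matrix.mulVec_injective_of_isUnit (isUnit_of_mem_oddDetMatrices hn hM)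
    (hMv.trans (Matrix.mulVec_zero M).symm)

end OddDeterminant

section Counting

variable {Ω : Type*}

lemma mul_card_filter_lt_card_le {J : Type*} (s : Finset Ω) (t : Finset J) (P : Ω → J → Prop)
    [∀ ω, DecidablePred (P ω)] {p T : ℝ} (h : ∀ j ∈ t, (#{ω ∈ s | P ω j} : ℝ) ≤ p) :
    T * #{ω ∈ s | T < #{j ∈ t | P ω j}} ≤ #t * p := by
  have hswap := sum_card_bipartiteAbove_eq_sum_card_bipartiteBelow (s := s) (t := t) P
  simp only [bipartiteAbove, bipartiteBelow] at hswap
  calc T * #{ω ∈ s | T < #{j ∈ t | P ω j}}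
      = ∑ ω ∈ s with T < #{j ∈ t | P ω j}, T := by
        rw [sum_const, nsmul_eq_mul, mul_comm]
    _ ≤ ∑ ω ∈ s with T < #{j ∈ t | P ω j}, (#{j ∈ t | P ω j} : ℝ) :=
        sum_le_sum fun ω hω => (mem_filter.1 hω).2.le
    _ ≤ ∑ ω ∈ s, (#{j ∈ t | P ω j} : ℝ) :=
        sum_le_sum_of_subset_of_nonneg (filter_subset _ _) fun _ _ _ => Nat.cast_nonneg _
    _ = ∑ j ∈ t, (#{ω ∈ s | P ω j} : ℝ) := by exact_mod_cast hswap
    _ ≤ #t * p := by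
        rw [← nsmul_eq_mul]
        exact sum_le_card_nsmul _ _ _ h

lemma card_filter_exists_le_of_hasSum {κ : Type*} (s : Finset Ω) (P : κ → Ω → Prop)
    {f : κ → ℝ} {C : ℝ} (hf : HasSum f C) (h : ∀ t, (#{ω ∈ s | P t ω} : ℝ) ≤ f t) :
    (#{ω ∈ s | ∃ t, P t ω} : ℝ) ≤ C := by
  choose τ hτ using fun ω : ({ω ∈ s | ∃ t, P t ω} : Finset Ω) => (mem_filter.1 ω.2).2
  let T := univ.image τ
  have hsub : ({ω ∈ s | ∃ t, P t ω} : Finset Ω) ⊆ T.biUnion fun t => {ω ∈ s | P t ω} := by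
    intro ω hω
    exact mem_biUnion.2 ⟨τ ⟨ω, hω⟩, mem_image_of_mem τ (mem_univ _),
      mem_filter.2 ⟨(mem_filter.1 hω).1, hτ ⟨ω, hω⟩⟩⟩
  calc (#{ω ∈ s | ∃ t, P t ω} : ℝ) ≤ ∑ t ∈ T, (#{ω ∈ s | P t ω} : ℝ) := by
        exact_mod_cast (card_le_card hsub).trans card_biUnion_le
    _ ≤ ∑ t ∈ T, f t := sum_le_sum fun t _ => h t
    _ ≤ C := sum_le_hasSum T (fun t _ => (Nat.cast_nonneg _).trans (h t)) hf

lemma card_filter_product_le {Q : Type*} (s : Finset Ω) (t : Finset Q) (P : Ω × Q → Prop)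
    [DecidablePred P] {p : ℝ} (h : ∀ q ∈ t, (#{ω ∈ s | P (ω, q)} : ℝ) ≤ p * #s) :
    (#{x ∈ s ×ˢ t | P x} : ℝ) ≤ p * #(s ×ˢ t) := by
  calc (#{x ∈ s ×ˢ t | P x} : ℝ) = ∑ q ∈ t, (#{ω ∈ s | P (ω, q)} : ℝ) := by
        simp only [card_filter, sum_product_right, Nat.cast_sum]
    _ ≤ ∑ _q ∈ t, p * #s := sum_le_sum h
    _ = p * #(s ×ˢ t) := by
        rw [sum_const, nsmul_eq_mul, card_product, Nat.cast_mul]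
        ring

variable {ι : Type*} [Fintype ι] [DecidableEq ι] (s : Finset Ω) (Q : Ω → Prop) [DecidablePred Q]

lemma card_filter_piFinset_mul_rpow_le {x : ℝ} (hx : 1 ≤ x) (y : ℝ) :
    #{H ∈ Fintype.piFinset fun _ : ι => s | y < #{r | Q (H r)}} * x ^ y ≤
      (#s + (x - 1) * #{ω ∈ s | Q ω}) ^ Fintype.card ι := by
  let w : Ω → ℝ := fun ω => if Q ω then x else 1
  have hw : ∀ ω, 0 ≤ w ω := fun ω => by
    dsimp only [w]
    split_ifs <;> linarith
  have hprod : ∀ H : ι → Ω, ∏ r, w (H r) = x ^ #{r | Q (H r)} := fun H => by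
    simp [w, prod_ite]
  have hsum : ∑ ω ∈ s, w ω = #s + (x - 1) * #{ω ∈ s | Q ω} := by
    have hdecomp : ∀ ω, w ω = 1 + (x - 1) * if Q ω then 1 else 0 := fun ω => by
      dsimp only [w]
      split_ifs <;> ring
    simp only [hdecomp, sum_add_distrib, sum_const, nsmul_eq_mul, mul_one, ← mul_sum, sum_boole]
  calc #{H ∈ Fintype.piFinset fun _ : ι => s | y < #{r | Q (H r)}} * x ^ y
      = ∑ H ∈ Fintype.piFinset fun _ : ι => s with y < #{r | Q (H r)}, x ^ y := by
        rw [sum_const, nsmul_eq_mul]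
    _ ≤ ∑ H ∈ Fintype.piFinset fun _ : ι => s with y < #{r | Q (H r)}, ∏ r, w (H r) := by
        refine sum_le_sum fun H hH => ?_
        rw [hprod, ← Real.rpow_natCast]
        exact Real.rpow_le_rpow_of_exponent_le hx (mem_filter.1 hH).2.le
    _ ≤ ∑ H ∈ Fintype.piFinset fun _ : ι => s, ∏ r, w (H r) :=
        sum_le_sum_of_subset_of_nonneg (filter_subset _ _) fun H _ _ =>
          prod_nonneg fun r _ => hw (H r)
    _ = (#s + (x - 1) * #{ω ∈ s | Q ω}) ^ Fintype.card ι := by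
        rw [← prod_univ_sum (fun _ : ι => s) fun _ => w, prod_const, hsum, card_univ]

variable {s Q}

lemma card_filter_piFinset_le {a : ℝ} (ha : 0 ≤ a)
    (hQ : (#{ω ∈ s | Q ω} : ℝ) ≤ a / 4 * #s) :
    (#{H ∈ Fintype.piFinset fun _ : ι => s | a * Fintype.card ι < #{r | Q (H r)}} : ℝ) ≤
      2 ^ (-(1 / 2 * a * Fintype.card ι)) * #(Fintype.piFinset fun _ : ι => s) := by
  set R := Fintype.card ι
  have hmoment := card_filter_piFinset_mul_rpow_le (ι := ι) s Q one_le_two (a * R)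
  have hbase : (#s + (2 - 1) * #{ω ∈ s | Q ω} : ℝ) ≤ #s * Real.exp (a / 4) := by
    nlinarith [Real.add_one_le_exp (a / 4), Nat.cast_nonneg (α := ℝ) #s]
  have hexp : Real.exp (a / 4) ^ R ≤ (2 : ℝ) ^ (1 / 2 * a * R) := by
    rw [Real.rpow_def_of_pos two_pos, ← Real.exp_nat_mul]
    refine Real.exp_le_exp.2 ?_
    have haR : 0 ≤ a * R := by positivity
    nlinarith [Real.log_two_gt_d9]
  have hsplit : (2 : ℝ) ^ (a * R) = 2 ^ (1 / 2 * a * R) * 2 ^ (1 / 2 * a * R) := by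
    rw [← Real.rpow_add two_pos]
    ring_nf
  rw [Real.rpow_neg zero_le_two, inv_mul_eq_div, le_div_iff₀ (by positivity)]
  refine le_of_mul_le_mul_right ?_ (show (0 : ℝ) < 2 ^ (1 / 2 * a * R) by positivity)
  calc _ = #{H ∈ Fintype.piFinset fun _ : ι => s | a * R < #{r | Q (H r)}} *
          (2 : ℝ) ^ (a * R) := by rw [hsplit, mul_assoc]
    _ ≤ (#s * Real.exp (a / 4)) ^ R := hmoment.trans (by gcongr)
    _ ≤ #(Fintype.piFinset fun _ : ι => s) * 2 ^ (1 / 2 * a * R) := by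
        rw [mul_pow, Fintype.card_piFinset, prod_const, card_univ, Nat.cast_pow]
        gcongr

lemma one_sub_rpow_le_card_filter_piFinset_div (hs : s.Nonempty) {a : ℝ} (ha : 0 ≤ a)
    (hQ : (#{ω ∈ s | ¬ Q ω} : ℝ) ≤ a / 4 * #s) :
    1 - (2 : ℝ) ^ (-(1 / 2 * a * Fintype.card ι)) ≤
      (#{H ∈ Fintype.piFinset fun _ : ι => s |
          (1 - a) * Fintype.card ι ≤ #{r | Q (H r)}} : ℝ) /
        #(Fintype.piFinset fun _ : ι => s) := by
  have hpos : (0 : ℝ) < #(Fintype.piFinset fun _ : ι => s) := by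
    exact_mod_cast (Fintype.piFinset_nonempty.2 fun _ => hs).card_pos
  have htail := card_filter_piFinset_le (ι := ι) ha hQ
  have hcompl : ∀ H : ι → Ω, a * Fintype.card ι < #{r | ¬ Q (H r)} ↔
      ¬ (1 - a) * Fintype.card ι ≤ #{r | Q (H r)} := fun H => by
    have hcard : (#{r | Q (H r)} + #{r | ¬ Q (H r)} : ℝ) = Fintype.card ι := by
      exact_mod_cast card_filter_add_card_filter_not (s := (univ : Finset ι)) fun r => Q (H r)
    rw [not_le]
    constructor <;> intro <;> linarith
  simp only [hcompl] at htail
  have hsplit : (#{H ∈ Fintype.piFinset fun _ : ι => s |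
        (1 - a) * Fintype.card ι ≤ #{r | Q (H r)}} +
      #{H ∈ Fintype.piFinset fun _ : ι => s |
        ¬ (1 - a) * Fintype.card ι ≤ #{r | Q (H r)}} : ℝ) =
      #(Fintype.piFinset fun _ : ι => s) := by
    exact_mod_cast card_filter_add_card_filter_not _
  rw [le_div_iff₀ hpos]
  linarith

end Counting

section Isolation

variable {n d b F k m : ℕ} [NeZero n] {α : ℝ}

lemma card_image_fperm_inter_ballInf_le (hb : b ∣ n) (S : Finset (Fin d → ZMod n))
    (M : Matrix (Fin d) (Fin d) (ZMod n)) (q i : Fin d → ZMod n) (t : ℕ) :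
    #(S.image (fun j => fperm M q j) ∩
        ballInf (bucketPt (n / b) (fperm M q i)) ((n : ℝ) / b * 2 ^ t)) ≤
      #{j ∈ S | linf (M.mulVec (i - j)) ≤ n / b * 2 ^ (t + 1)} := by
  have hcast : (n : ℝ) / b * 2 ^ t = (n / b * 2 ^ t : ℕ) := by
    rw [Nat.cast_mul, Nat.cast_div_charZero hb, Nat.cast_pow, Nat.cast_ofNat]
  have hg : 0 < n / b := Nat.div_pos (Nat.le_of_dvd (NeZero.pos n) hb)
    (Nat.pos_of_dvd_of_pos hb (NeZero.pos n))
  refine (card_le_card fun y hy => ?_).trans (card_image_le (f := fun j => fperm M q j))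
  obtain ⟨hyS, hyball⟩ := mem_inter.1 hy
  obtain ⟨j, hj, rfl⟩ := mem_image.1 hyS
  rw [ballInf, mem_filter_univ, hcast, Nat.cast_le] at hyball
  refine mem_image_of_mem _ (mem_filter.2 ⟨hj, ?_⟩)
  have hsplit : M.mulVec (i - j) = (fperm M q i - bucketPt (n / b) (fperm M q i)) +
      (bucketPt (n / b) (fperm M q i) - fperm M q j) := by
    rw [sub_add_sub_cancel, fperm, fperm, ← Matrix.mulVec_sub, sub_sub_sub_cancel_right]
  calc linf (M.mulVec (i - j)) ≤ n / b + n / b * 2 ^ t :=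
        hsplit ▸ (linf_add_le _ _).trans (add_le_add (linf_sub_bucketPt_le hg _) hyball)
    _ ≤ n / b * 2 ^ t + n / b * 2 ^ t :=
        Nat.add_le_add_right (Nat.le_mul_of_pos_right _ (by positivity)) _
    _ = n / b * 2 ^ (t + 1) := by ring

variable {S : Finset (Fin d → ZMod n)}

lemma exists_lt_card_of_not_isolatedUnder (hb : b ∣ n) {M : Matrix (Fin d) (Fin d) (ZMod n)}
    {q i : Fin d → ZMod n} (h : ¬ isolatedUnder b F α S M q i) :
    ∃ t : ℕ, ((2 * Real.pi) ^ (F * d))⁻¹ * α ^ ((d : ℝ) / 2) * 2 ^ ((t + 1) * d) * 2 ^ t <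
      (#{j ∈ S.erase i | linf (M.mulVec (i - j)) ≤ n / b * 2 ^ (t + 1)} : ℝ) := by
  obtain ⟨t, ht⟩ := not_forall.1 h
  exact ⟨t, (not_le.1 ht).trans_le
    (mod_cast card_image_fperm_inter_ballInf_le hb (S.erase i) M q i t)⟩

lemma card_filter_oddDetMatrices_linf_mulVec_le (hn : n = 2 ^ m) (hn1 : 1 < n) (hb : b ∣ n)
    {v : Fin d → ZMod n} (hv : v ≠ 0) (s : ℕ) :
    (#{M ∈ oddDetMatrices n d | linf (M.mulVec v) ≤ n / b * s} : ℝ) ≤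
      (4 * s) ^ d / b ^ d * #(oddDetMatrices n d) := by
  have hcount := card_filter_oddDetMatrices_linf_mulVec_mul_le hn hn1 hv (n / b * s)
  have hn0 : (0 : ℝ) < n := by exact_mod_cast NeZero.pos n
  have hcountR : (#{M ∈ oddDetMatrices n d | linf (M.mulVec v) ≤ n / b * s} : ℝ) * n ^ d ≤
      (4 * (n / b * s)) ^ d * #(oddDetMatrices n d) := by
    rw [← Nat.cast_div_charZero hb]
    exact_mod_cast hcount
  refine le_of_mul_le_mul_right (hcountR.trans_eq ?_) (pow_pos hn0 d)
  rw [show (4 * (n / b * s) : ℝ) = 4 * s / b * n by ring, mul_pow, div_pow]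
  ring

lemma mul_four_pow_le_of_bucket_bound (hα : 0 < α) (hα1 : α ≤ 1) (hd : 1 ≤ d) (hF : 1 ≤ F)
    (hB : (2 * Real.pi) ^ (4 * F * d) * k / α ^ d ≤ (b : ℝ) ^ d) :
    16 * k * 4 ^ d ≤
      √α * (((2 * Real.pi) ^ (F * d))⁻¹ * α ^ ((d : ℝ) / 2)) * (b : ℝ) ^ d := by
  set X : ℝ := (2 * Real.pi) ^ (F * d) with hX
  set β : ℝ := α ^ ((d : ℝ) / 2) with hβ
  have hβpos : 0 < β := Real.rpow_pos_of_pos hα _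
  have hβsq : α ^ d = β ^ 2 := by
    rw [hβ, ← Real.rpow_mul_natCast hα.le, Nat.cast_ofNat, div_mul_cancel₀ _ two_ne_zero,
      Real.rpow_natCast]
  have hβle : β ≤ √α := by
    rw [Real.sqrt_eq_rpow]
    refine Real.rpow_le_rpow_of_exponent_ge hα hα1 ?_
    gcongr
    exact_mod_cast hd
  have hdX : (4 : ℝ) ^ d ≤ X := calc
    (4 : ℝ) ^ d ≤ 4 ^ (F * d) := pow_le_pow_right₀ (by norm_num) (Nat.le_mul_of_pos_left d hF)
    _ ≤ X := pow_le_pow_left₀ (by norm_num) (by linarith [Real.pi_gt_three]) _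
  have hX4 : 4 ≤ X := (le_self_pow₀ (by norm_num) (Nat.pos_iff_ne_zero.1 hd)).trans hdX
  have hBX : X ^ 4 * k ≤ b ^ d * β ^ 2 := by
    rw [hβsq, div_le_iff₀ (by positivity)] at hB
    rwa [hX, ← pow_mul, show F * d * 4 = 4 * F * d by ring]
  calc 16 * k * 4 ^ d ≤ X ^ 2 * k * X := by
        gcongr
        nlinarith
    _ = X ^ 4 * k / X := by
        field_simp
    _ ≤ b ^ d * (√α * β) / X := by
        refine div_le_div_of_nonneg_right (hBX.trans ?_) (by positivity)
        rw [sq]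
        gcongr
    _ = √α * (X⁻¹ * β) * b ^ d := by
        ring

lemma one_lt_of_bucket_bound (hα : 0 < α) (hα1 : α ≤ 1) (hd : 1 ≤ d) (hF : 1 ≤ F) (hk : 1 ≤ k)
    (hB : (2 * Real.pi) ^ (4 * F * d) * k / α ^ d ≤ (b : ℝ) ^ d) : 1 < b := by
  have hpow : 1 < (2 * Real.pi) ^ (4 * F * d) :=
    one_lt_pow₀ (by linarith [Real.pi_gt_three]) (by positivity)
  have hlt : (1 : ℝ) < b ^ d := calc
    1 < (2 * Real.pi) ^ (4 * F * d) := hpow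
    _ ≤ (2 * Real.pi) ^ (4 * F * d) * k := le_mul_of_one_le_right (by positivity) (mod_cast hk)
    _ ≤ (2 * Real.pi) ^ (4 * F * d) * k / α ^ d :=
        le_div_self (by positivity) (by positivity) (pow_le_one₀ hα.le hα1)
    _ ≤ b ^ d := hB
  exact_mod_cast lt_of_pow_lt_pow_left₀ d (by positivity) ((one_pow d).trans_lt hlt)

lemma card_filter_lt_card_collisions_le (hn : n = 2 ^ m) (hn1 : 1 < n) (hS : #S ≤ 2 * k)
    (hb : b ∣ n) {C ε : ℝ} (hC : 0 < C) (hCε : 16 * k * 4 ^ d ≤ ε * C * (b : ℝ) ^ d)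
    (i : Fin d → ZMod n) (t : ℕ) :
    (#{M ∈ oddDetMatrices n d | C * 2 ^ ((t + 1) * d) * 2 ^ t <
        (#{j ∈ S.erase i | linf (M.mulVec (i - j)) ≤ n / b * 2 ^ (t + 1)} : ℝ)} : ℝ) ≤
      ε / 8 * #(oddDetMatrices n d) * (1 / 2) ^ t := by
  have hb0 : (0 : ℝ) < b := by exact_mod_cast Nat.pos_of_dvd_of_pos hb (NeZero.pos n)
  have hmarkov := mul_card_filter_lt_card_le (oddDetMatrices n d) (S.erase i)
    (fun M j => linf (M.mulVec (i - j)) ≤ n / b * 2 ^ (t + 1))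
    (T := C * 2 ^ ((t + 1) * d) * 2 ^ t) fun j hj =>
      card_filter_oddDetMatrices_linf_mulVec_le hn hn1 hb
        (sub_ne_zero.2 (ne_of_mem_erase hj).symm) (2 ^ (t + 1))
  have hJ : (#(S.erase i) : ℝ) ≤ 2 * k := by
    exact_mod_cast (card_le_card (erase_subset i S)).trans hS
  refine le_of_mul_le_mul_left (hmarkov.trans ?_)
    (show 0 < C * 2 ^ ((t + 1) * d) * (2 : ℝ) ^ t by positivity)
  set u : ℝ := (#(oddDetMatrices n d) : ℝ)
  set w : ℝ := 2 ^ ((t + 1) * d) with hw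
  calc #(S.erase i) * ((4 * (2 ^ (t + 1) : ℕ)) ^ d / b ^ d * u)
      ≤ 2 * k * ((4 * (2 ^ (t + 1) : ℕ)) ^ d / b ^ d * u) := by gcongr
    _ = 16 * k * 4 ^ d / b ^ d * (w * u / 8) := by
        rw [hw, Nat.cast_pow, Nat.cast_ofNat, mul_pow, ← pow_mul]
        ring
    _ ≤ ε * C * (w * u / 8) := by
        gcongr
        exact (div_le_iff₀ (pow_pos hb0 d)).2 hCε
    _ = C * w * 2 ^ t * (ε / 8 * u * (1 / 2) ^ t) := by
        rw [one_div, inv_pow]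
        field_simp

lemma card_filter_not_isolatedUnder_le (hn : n = 2 ^ m) (hn1 : 1 < n) (hS : #S ≤ 2 * k)
    (hα : 0 < α) (hα1 : α ≤ 1) (hd : 1 ≤ d) (hF : 1 ≤ F) (hb : b ∣ n)
    (hB : (2 * Real.pi) ^ (4 * F * d) * k / α ^ d ≤ (b : ℝ) ^ d) (q i : Fin d → ZMod n) :
    (#{M ∈ oddDetMatrices n d | ¬ isolatedUnder b F α S M q i} : ℝ) ≤
      √α / 4 * #(oddDetMatrices n d) := by
  have hsum : HasSum (fun t : ℕ => √α / 8 * #(oddDetMatrices n d) * (1 / 2) ^ t)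
      (√α / 4 * #(oddDetMatrices n d)) := by
    rw [show √α / 4 * #(oddDetMatrices n d) = √α / 8 * #(oddDetMatrices n d) * 2 by ring]
    exact hasSum_geometric_two.mul_left _
  refine le_trans ?_ <| card_filter_exists_le_of_hasSum (oddDetMatrices n d) _ hsum <|
    card_filter_lt_card_collisions_le hn hn1 hS hb (by positivity)
      (mul_four_pow_le_of_bucket_bound hα hα1 hd hF hB) i
  exact Nat.cast_le.2 <| card_le_card <| monotone_filter_right _ fun M _ hM =>
    exists_lt_card_of_not_isolatedUnder hb hM

end Isolation

theorem stmt4_general (n : ℕ) [NeZero n] (d m k b F rmax : ℕ) (α : ℝ)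
    (S : Finset (Fin d → ZMod n)) (i : Fin d → ZMod n) (hn : n = 2 ^ m) (hd : 1 ≤ d)
    (hk : 1 ≤ k) (hS : S.card ≤ 2 * k) (hα : α ∈ Set.Ioc 0 1) (hF : 1 ≤ F) (hb : b ∣ n)
    (hB : (2 * Real.pi) ^ (4 * F * d) * k / α ^ d ≤ (b : ℝ) ^ d) :
    1 - (2 : ℝ) ^ (-(1 / 2 * Real.sqrt α * rmax)) ≤
      ((univ.filter
          (fun H : Fin rmax → Matrix (Fin d) (Fin d) (ZMod n) × (Fin d → ZMod n) =>
            (∀ r, Odd (Matrix.det (H r).1).val) ∧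
            (1 - Real.sqrt α) * rmax ≤
              ((univ.filter (fun r : Fin rmax =>
                  isolatedUnder b F α S (H r).1 (H r).2 i)).card : ℝ))).card : ℝ)
      / ((univ.filter
          (fun H : Fin rmax → Matrix (Fin d) (Fin d) (ZMod n) × (Fin d → ZMod n) =>
            ∀ r, Odd (Matrix.det (H r).1).val)).card : ℝ) := by
  have hn1 : 1 < n := (one_lt_of_bucket_bound hα.1 hα.2 hd hF hk hB).trans_le
    (Nat.le_of_dvd (NeZero.pos n) hb)
  have hbad := card_filter_product_le (oddDetMatrices n d) (univ : Finset (Fin d → ZMod n))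
    (fun x => ¬ isolatedUnder b F α S x.1 x.2 i)
    fun q _ => card_filter_not_isolatedUnder_le hn hn1 hS hα.1 hα.2 hd hF hb hB q i
  have hspace : (univ.filter
      fun H : Fin rmax → Matrix (Fin d) (Fin d) (ZMod n) × (Fin d → ZMod n) =>
        ∀ r, Odd (Matrix.det (H r).1).val) =
      Fintype.piFinset fun _ => oddDetMatrices n d ×ˢ univ := by
    ext H
    simp [oddDetMatrices]
  have hmain := one_sub_rpow_le_card_filter_piFinset_div (ι := Fin rmax)
    ((oddDetMatrices_nonempty hn1).product univ_nonempty) α.sqrt_nonneg hbad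
  rw [← hspace, filter_filter, Fintype.card_fin] at hmain
  exact hmain

theorem stmt4 :
    ∃ α₀ ∈ Set.Ioo (0 : ℝ) 1, ∃ c : ℝ, 0 < c ∧
      ∀ (n : ℕ) [NeZero n] (d m k b mb F rmax : ℕ) (α : ℝ)
        (S : Finset (Fin d → ZMod n)) (i : Fin d → ZMod n),
        n = 2 ^ m → 1 ≤ d → 1 ≤ k → S.card ≤ 2 * k →
        α ∈ Set.Ioo 0 α₀ → 2 * d ≤ F → b = 2 ^ mb → b ∣ n →
        (2 * Real.pi) ^ (4 * F * d) * k / α ^ d ≤ (b : ℝ) ^ d →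
        1 - (2 : ℝ) ^ (-(c * Real.sqrt α * rmax)) ≤
          ((univ.filter
              (fun H : Fin rmax → Matrix (Fin d) (Fin d) (ZMod n) × (Fin d → ZMod n) =>
                (∀ r, Odd (Matrix.det (H r).1).val) ∧
                (1 - Real.sqrt α) * rmax ≤
                  ((univ.filter (fun r : Fin rmax =>
                      isolatedUnder b F α S (H r).1 (H r).2 i)).card : ℝ))).card : ℝ)
          / ((univ.filter
              (fun H : Fin rmax → Matrix (Fin d) (Fin d) (ZMod n) × (Fin d → ZMod n) =>
                ∀ r, Odd (Matrix.det (H r).1).val)).card : ℝ) := by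
  exact ⟨1 / 2, ⟨by norm_num, by norm_num⟩, 1 / 2, by norm_num,
    fun n _ d m k b _ F rmax α S i hn hd hk hS hα hF _ hb hB =>
      stmt4_general n d m k b F rmax α S i hn hd hk hS ⟨hα.1, by linarith [hα.2]⟩ (by omega)
        hb hB⟩
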